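/- Let α > 1, w > 0, and 0 ≤ t₀ < d be real numbers, and let U ≥ w^α (d − t₀)^{1−α}. Define the welfare of a type A player whose job completes at time t > t₀ as U − w^α (t − t₀)^{1−α} if t ≤ d, and −w^α (t − t₀)^{1−α} if t > d. Then the welfare at completion time t = d, namely U − w^α (d − t₀)^{1−α}, is greater than or equal to the welfare at any other completion time t > t₀. (Hence, under the proportional cost sharing mechanism, a completion time equal to the true deadline — obtained by truthfully announcing the deadline — yields the highest possible welfare among all achievable completion times.) -/

import Mathlib

/-- For a type A player with workload `w`, true deadline `d`, utility
`U ≥ w^α (d - t₀)^(1-α)` and preceding completion time `t₀`, the welfare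
`(if t ≤ d then U else 0) - w^α (t - t₀)^(1-α)` at completion time `t = d` is at least
the welfare at any other achievable completion time `t > t₀`. -/
theorem typeA_truthful_deadline_best
    (α w t₀ d U : ℝ) (hα : 1 < α) (hw : 0 < w) (ht₀ : 0 ≤ t₀) (htd : t₀ < d)
    (hU : w ^ α * (d - t₀) ^ (1 - α) ≤ U) :
    ∀ t : ℝ, t₀ < t →
      (if t ≤ d then U - w ^ α * (t - t₀) ^ (1 - α)
        else -(w ^ α * (t - t₀) ^ (1 - α))) ≤
      U - w ^ α * (d - t₀) ^ (1 - α) := by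
  intro t ht
  have hwα : 0 ≤ w ^ α := Real.rpow_nonneg hw.le α
  split_ifs with h
  · -- finishing early only raises the energy cost, as `1 - α < 0`
    have hcost : (d - t₀) ^ (1 - α) ≤ (t - t₀) ^ (1 - α) :=
      Real.rpow_le_rpow_of_nonpos (by linarith) (by linarith) (by linarith)
    linarith [mul_le_mul_of_nonneg_left hcost hwα]
  · -- finishing late gives nonpositive welfare, while finishing at `d` gives nonnegative welfare
    have hlate : 0 ≤ w ^ α * (t - t₀) ^ (1 - α) :=
      mul_nonneg hwα (Real.rpow_nonneg (by linarith) _)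
    linarith
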